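/- arXiv:1607.04442 — 2 statements merged into one kernel-verified Lean document; each statement's English description precedes it below -/
import Mathlib

section
/- Let n ≥ 1, 1 ≤ p < ∞ and 0 ≤ λ ≤ n. If f belongs to the homogeneous Morrey space L^{p,λ}(ℝⁿ) and satisfies the vanishing property (V*), and φ ∈ L¹(ℝⁿ), then the convolution f ∗ φ belongs to L^{p,λ}(ℝⁿ) and satisfies (V*). -/
/-!
Write `g = |f|` and let `c = ‖φ‖₁`. Jensen's inequality for the measure `|φ(z)| dz` gives
`|f ∗ φ|(x) ^ p ≤ c ^ (p - 1) ∫ |φ(z)| g(x - z) ^ p dz`, and integrating over a set `S`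
(`lintegral_conv_rpow_le`) bounds `∫_S |f ∗ φ| ^ p` by integrals of `g ^ p` over translates of `S`.

For `S` a ball the translates are balls of the same radius, so the Morrey bound survives with the
factor `c ^ p` (`lintegral_ball_conv_le`). For `S = B(x,1) ∩ {|y| ≥ N}` the translate by `z` lies in
`B(x - z,1) ∩ {|y| ≥ N - |z|}`, so `𝒜_N(f ∗ φ) ≤ c ^ (p - 1) ∫ |φ(z)| 𝒜_{N - |z|}(f) dz`
(`eMorreyA_conv_le`); the right side tends to `0` by dominated convergence.

Local `p`-integrability of `f` as encoded in `LocIntPow` makes only `|f|` measurable, not `f`, and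
the Bochner integral defining `conv` is `0` wherever its integrand fails to be measurable.
Measurability of `f ∗ φ` therefore needs an argument of its own (`aestronglyMeasurable_conv`): the
non-measurability of `f` is confined to a measurable set, `signHull`, on which a product of `f` with a
measurable function can be measurable only if it vanishes almost everywhere there.
-/

open MeasureTheory Metric Filter Topology

/-- The Morrey quantity `𝔐_{p,λ}(f;x,r) = r^{-λ} ∫_{B(x,r)} |f(y)|^p dy`. -/
noncomputable def morreyM (n : ℕ) (p lam : ℝ) (f : EuclideanSpace ℝ (Fin n) → ℝ)
    (x : EuclideanSpace ℝ (Fin n)) (r : ℝ) : ℝ :=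
  r ^ (-lam) * ∫ y in ball x r, |f y| ^ p

/-- Local `p`-integrability: `|f|^p` is integrable on every ball. -/
def LocIntPow (n : ℕ) (p : ℝ) (f : EuclideanSpace ℝ (Fin n) → ℝ) : Prop :=
  ∀ (x : EuclideanSpace ℝ (Fin n)) (r : ℝ), 0 < r →
    IntegrableOn (fun y => |f y| ^ p) (ball x r) volume

/-- Membership in the homogeneous Morrey space `L^{p,λ}(ℝⁿ)`. -/
def MemMorrey (n : ℕ) (p lam : ℝ) (f : EuclideanSpace ℝ (Fin n) → ℝ) : Prop :=
  LocIntPow n p f ∧ ∃ C : ℝ, ∀ x r, 0 < r → morreyM n p lam f x r ≤ C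

/-- The homogeneous Morrey norm `‖f‖_{p,λ}`. -/
noncomputable def morreyNorm (n : ℕ) (p lam : ℝ) (f : EuclideanSpace ℝ (Fin n) → ℝ) : ℝ :=
  sSup {c : ℝ | ∃ x r, 0 < r ∧ c = morreyM n p lam f x r} ^ (1 / p)

/-- The vanishing property `(V⁰)` at the origin. -/
def VZero (n : ℕ) (p lam : ℝ) (f : EuclideanSpace ℝ (Fin n) → ℝ) : Prop :=
  Tendsto (fun r : ℝ => ⨆ x, morreyM n p lam f x r) (nhdsWithin 0 (Set.Ioi 0)) (nhds 0)

/-- The vanishing property `(V^∞)` at infinity. -/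
def VInfty (n : ℕ) (p lam : ℝ) (f : EuclideanSpace ℝ (Fin n) → ℝ) : Prop :=
  Tendsto (fun r : ℝ => ⨆ x, morreyM n p lam f x r) atTop (nhds 0)

/-- `𝒜_{N,p}(f) = sup_x ∫_{B(x,1)} |f(y)|^p χ_{{|y| ≥ N}}(y) dy`. -/
noncomputable def morreyA (n : ℕ) (p : ℝ) (N : ℝ) (f : EuclideanSpace ℝ (Fin n) → ℝ) : ℝ :=
  ⨆ x, ∫ y in ball x 1 ∩ {y : EuclideanSpace ℝ (Fin n) | N ≤ ‖y‖}, |f y| ^ p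

/-- The vanishing property `(V*)`. -/
def VStar (n : ℕ) (p : ℝ) (f : EuclideanSpace ℝ (Fin n) → ℝ) : Prop :=
  Tendsto (fun N : ℕ => morreyA n p (N : ℝ) f) atTop (nhds 0)

/-- Convolution `(f ∗ g)(x) = ∫ f(x - z) g(z) dz`. -/
noncomputable def conv (n : ℕ) (f g : EuclideanSpace ℝ (Fin n) → ℝ)
    (x : EuclideanSpace ℝ (Fin n)) : ℝ :=
  ∫ z, f (x - z) * g z

open scoped ENNReal

/-! ### Measurability of the convolution -/

/-- The measurable set on which `f` oscillates in sign non-measurably: for s-finite `μ`, both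
`{f > 0}` and `{f < 0}` have full outer measure in every measurable subset of it. -/
noncomputable def signHull {α : Type*} [MeasurableSpace α] (μ : Measure α) (f : α → ℝ) : Set α :=
  toMeasurable μ {y | 0 < f y} ∩ toMeasurable μ {y | f y < 0}

lemma measurableSet_signHull {α : Type*} [MeasurableSpace α] (μ : Measure α) (f : α → ℝ) :
    MeasurableSet (signHull μ f) :=
  (measurableSet_toMeasurable _ _).inter (measurableSet_toMeasurable _ _)

/-- Off the sign hull, `f` agrees with `-|f|` on one measurable set and with `|f|` on another, so it
is measurable as soon as `|f|` is. -/
lemma aemeasurable_indicator_compl_signHull {α : Type*} [MeasurableSpace α] {μ : Measure α}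
    {f : α → ℝ} (hf : AEMeasurable (fun y => |f y|) μ) :
    AEMeasurable ((signHull μ f)ᶜ.indicator f) μ := by
  rw [aemeasurable_indicator_iff (measurableSet_signHull μ f).compl, signHull, Set.compl_inter,
    aemeasurable_union_iff]
  constructor
  · refine (hf.neg.restrict (s := (toMeasurable μ {y | 0 < f y})ᶜ)).congr ?_
    filter_upwards [ae_restrict_mem (measurableSet_toMeasurable _ _).compl] with y hy
    have : ¬ 0 < f y := fun h => hy (subset_toMeasurable μ {y | 0 < f y} h)
    simp [abs_of_nonpos (not_lt.1 this)]
  · refine (hf.restrict (s := (toMeasurable μ {y | f y < 0})ᶜ)).congr ?_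
    filter_upwards [ae_restrict_mem (measurableSet_toMeasurable _ _).compl] with y hy
    have : ¬ f y < 0 := fun h => hy (subset_toMeasurable μ {y | f y < 0} h)
    simp [abs_of_nonneg (not_lt.1 this)]

/-- On the sign hull a product `f ψ` with `ψ` measurable can be measurable only by vanishing:
where `f ψ ≠ 0`, the signs of `f ψ` and `ψ` determine that of `f`, which makes `{f > 0}` and
`{f < 0}` disjoint null-measurable sets, each of full measure. -/
lemma mul_eq_zero_on_signHull {α : Type*} [MeasurableSpace α] {μ : Measure α} [SigmaFinite μ]
    {f ψ : α → ℝ} (hψ : AEMeasurable ψ μ) (hu : AEMeasurable (fun y => f y * ψ y) μ) :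
    ∀ᵐ y ∂μ, y ∈ signHull μ f → f y * ψ y = 0 := by
  set A : Set α := signHull μ f ∩ {y | f y * ψ y ≠ 0} with hA
  have hup : NullMeasurableSet {y | 0 < f y * ψ y} μ := nullMeasurableSet_lt aemeasurable_const hu
  have hun : NullMeasurableSet {y | f y * ψ y < 0} μ := nullMeasurableSet_lt hu aemeasurable_const
  have hψp : NullMeasurableSet {y | 0 < ψ y} μ := nullMeasurableSet_lt aemeasurable_const hψ
  have hψn : NullMeasurableSet {y | ψ y < 0} μ := nullMeasurableSet_lt hψ aemeasurable_const
  have hne : {y | f y * ψ y ≠ 0} = {y | 0 < f y * ψ y} ∪ {y | f y * ψ y < 0} := by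
    ext y
    simp only [Set.mem_ofPred_eq, Set.mem_union]
    rw [ne_iff_lt_or_gt, or_comm]
  have hAm : NullMeasurableSet A μ := by
    rw [hA, hne]
    exact (measurableSet_signHull μ f).nullMeasurableSet.inter (hup.union hun)
  obtain ⟨B, hBA, hBm, hBe⟩ := hAm.exists_measurable_subset_ae_eq
  have hB0 : μ B = 0 := by
    have key : ∀ k, μ (B ∩ spanningSets μ k) = 0 := by
      intro k
      set D := B ∩ spanningSets μ k with hD
      have hDm : MeasurableSet D := hBm.inter (measurableSet_spanningSets μ k)
      have hDfin : μ D ≠ ∞ :=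
        ((measure_mono Set.inter_subset_right).trans_lt (measure_spanningSets_lt_top μ k)).ne
      have hDA : D ⊆ A := Set.inter_subset_left.trans hBA
      have h1 : μ ({y | 0 < f y} ∩ D) = μ D := by
        rw [← Measure.measure_toMeasurable_inter_of_sFinite hDm, Set.inter_eq_right.2]
        exact fun y hy => (hDA hy).1.1
      have h2 : μ ({y | f y < 0} ∩ D) = μ D := by
        rw [← Measure.measure_toMeasurable_inter_of_sFinite hDm, Set.inter_eq_right.2]
        exact fun y hy => (hDA hy).1.2
      have hP : NullMeasurableSet ({y | 0 < f y} ∩ D) μ := by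
        have : {y | 0 < f y} ∩ D = (({y | 0 < f y * ψ y} ∩ {y | 0 < ψ y}) ∪
            ({y | f y * ψ y < 0} ∩ {y | ψ y < 0})) ∩ D := by
          ext y
          simp only [Set.mem_inter_iff, Set.mem_union, Set.mem_ofPred_eq]
          refine and_congr_left fun hy => ?_
          have hyn : f y * ψ y ≠ 0 := (hDA hy).2
          have hψ0 : ψ y ≠ 0 := right_ne_zero_of_mul hyn
          constructor
          · intro h
            rcases lt_or_gt_of_ne hψ0 with h' | h'
            · exact Or.inr ⟨mul_neg_of_pos_of_neg h h', h'⟩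
            · exact Or.inl ⟨mul_pos h h', h'⟩
          · rintro (⟨h, h'⟩ | ⟨h, h'⟩)
            · exact pos_of_mul_pos_left h h'.le
            · by_contra hc
              exact absurd (mul_nonneg_of_nonpos_of_nonpos (not_lt.1 hc) h'.le) (not_le.2 h)
        rw [this]
        exact ((hup.inter hψp).union (hun.inter hψn)).inter hDm.nullMeasurableSet
      have hdisj : Disjoint ({y | f y < 0} ∩ D) ({y | 0 < f y} ∩ D) := by
        rw [Set.disjoint_left]
        rintro y ⟨hy, -⟩ ⟨hy', -⟩
        exact lt_asymm (show f y < 0 from hy) hy'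
      have h3 : μ D + μ D ≤ μ D + 0 := by
        calc μ D + μ D = μ (({y | f y < 0} ∩ D) ∪ ({y | 0 < f y} ∩ D)) := by
              rw [measure_union₀ hP hdisj.aedisjoint, h1, h2]
          _ ≤ μ D + 0 := by
              rw [add_zero]
              exact measure_mono (Set.union_subset Set.inter_subset_right Set.inter_subset_right)
      exact le_antisymm ((ENNReal.add_le_add_iff_left hDfin).1 h3) zero_le
    have : B = ⋃ k, B ∩ spanningSets μ k := by
      rw [← Set.inter_iUnion, iUnion_spanningSets, Set.inter_univ]
    rw [this, measure_iUnion_null_iff]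
    exact key
  have hA0 : μ A = 0 := by rw [← measure_congr hBe, hB0]
  filter_upwards [measure_eq_zero_iff_ae_notMem.1 hA0] with y hy hyT
  by_contra hc
  exact hy ⟨hyT, hc⟩

/-- The convolution is measurable even when only `|f|` is assumed measurable. With `T` the sign hull
of `f` and `F = 1_{Tᶜ} f`, the integrand `f (x - ·) φ` is measurable exactly when
`W x = ∫ 1_T(x - z) |f (x - z) φ z| dz` vanishes, so `f ∗ φ` is the restriction of `F ∗ φ` to the
set `{W = 0}`, extended by the junk value `0`. -/
lemma aestronglyMeasurable_conv {n : ℕ} {f φ : EuclideanSpace ℝ (Fin n) → ℝ}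
    (hf : AEMeasurable (fun y => |f y|)) (hφ : AEMeasurable φ) :
    AEStronglyMeasurable (conv n f φ) := by
  set T := signHull volume f with hT
  have hTm : MeasurableSet T := measurableSet_signHull _ f
  set F := Tᶜ.indicator f with hFdef
  have hF : AEMeasurable F := aemeasurable_indicator_compl_signHull hf
  set g := T.indicator (fun y => |f y|) with hg
  have hgm : AEMeasurable g := hf.indicator hTm
  have qmp := quasiMeasurePreserving_sub_of_right_invariant
    (volume : Measure (EuclideanSpace ℝ (Fin n))) (volume : Measure (EuclideanSpace ℝ (Fin n)))
  have qmpx := quasiMeasurePreserving_sub_left_of_right_invariant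
    (volume : Measure (EuclideanSpace ℝ (Fin n)))
  set W : EuclideanSpace ℝ (Fin n) → ℝ≥0∞ := fun x => ∫⁻ z, ‖g (x - z) * φ z‖ₑ with hW
  have hWm : AEMeasurable W := by
    have : AEMeasurable (fun q : EuclideanSpace ℝ (Fin n) × EuclideanSpace ℝ (Fin n) =>
        ‖g (q.1 - q.2) * φ q.2‖ₑ) (volume.prod volume) :=
      ((hgm.comp_quasiMeasurePreserving qmp).mul hφ.comp_snd).enorm
    exact this.lintegral_prod_right'
  have hcF : AEStronglyMeasurable (conv n F φ) := by
    have : AEStronglyMeasurable (fun q : EuclideanSpace ℝ (Fin n) × EuclideanSpace ℝ (Fin n) =>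
        F (q.1 - q.2) * φ q.2) (volume.prod volume) :=
      ((hF.comp_quasiMeasurePreserving qmp).mul hφ.comp_snd).aestronglyMeasurable
    exact this.integral_prod_right'
  have hG : NullMeasurableSet {x | W x = 0} :=
    hWm.nullMeasurableSet_preimage (measurableSet_singleton 0)
  have heq : conv n f φ = {x | W x = 0}.indicator (conv n F φ) := by
    funext x
    by_cases hx : W x = 0
    · rw [Set.indicator_of_mem (show x ∈ {x | W x = 0} from hx)]
      refine integral_congr_ae ?_
      have hint : AEMeasurable (fun z => ‖g (x - z) * φ z‖ₑ) :=
        ((hgm.comp_quasiMeasurePreserving (qmpx x)).mul hφ).enorm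
      filter_upwards [(lintegral_eq_zero_iff' hint).1 hx] with z hz
      have hz' : g (x - z) * φ z = 0 := by simpa using hz
      by_cases hxT : x - z ∈ T
      · have : f (x - z) * φ z = 0 := by
          simpa [hg, hxT] using hz'
        simp [hFdef, hxT, this]
      · simp [hFdef, hxT]
    · rw [Set.indicator_of_notMem (show x ∉ {x | W x = 0} from hx)]
      refine integral_undef fun hi => hx ?_
      have hu : AEMeasurable (fun y => f y * φ (x - y)) := by
        have := hi.aestronglyMeasurable.aemeasurable.comp_quasiMeasurePreserving (qmpx x)
        simpa [Function.comp_def] using this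
      have h0 := (qmpx x).ae
        (mul_eq_zero_on_signHull (hφ.comp_quasiMeasurePreserving (qmpx x)) hu)
      refine lintegral_eq_zero_of_ae_eq_zero ?_
      filter_upwards [h0] with z hz
      by_cases hxT : x - z ∈ T
      · have := hz hxT
        simp only [Function.comp_apply, sub_sub_cancel] at this
        simpa [hg, hxT] using this
      · simp [hg, hxT]
  rw [heq]
  exact hcF.indicator₀ hG

/-! ### The convolution inequality -/

/-- Jensen's inequality for a measure that need not be normalised. -/
lemma lintegral_rpow_le_measure_univ_mul {α : Type*} [MeasurableSpace α] (ν : Measure α) {p : ℝ}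
    (hp : 1 ≤ p) {G : α → ℝ≥0∞} (hG : AEMeasurable G ν) :
    (∫⁻ a, G a ∂ν) ^ p ≤ ν Set.univ ^ (p - 1) * ∫⁻ a, G a ^ p ∂ν := by
  have hp0 : 0 < p := by linarith
  have h := eLpNorm_le_eLpNorm_mul_rpow_measure_univ (μ := ν) (p := 1) (q := ENNReal.ofReal p)
    (by simpa using hp) hG.aestronglyMeasurable
  rw [eLpNorm_one_eq_lintegral_enorm,
    eLpNorm_eq_lintegral_rpow_enorm_toReal (by simpa using hp0) ENNReal.ofReal_ne_top,
    ENNReal.toReal_ofReal hp0.le] at h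
  simp only [enorm_eq_self, ENNReal.toReal_one] at h
  calc (∫⁻ a, G a ∂ν) ^ p
      ≤ ((∫⁻ a, G a ^ p ∂ν) ^ (1 / p) * ν Set.univ ^ (1 / 1 - 1 / p)) ^ p := by gcongr
    _ = _ := by
      rw [ENNReal.mul_rpow_of_nonneg _ _ hp0.le, ← ENNReal.rpow_mul, ← ENNReal.rpow_mul, mul_comm]
      congr 2
      · field_simp
      · rw [one_div_mul_cancel hp0.ne', ENNReal.rpow_one]

/-- Pointwise Jensen followed by Tonelli: the `p`-th power integral of `f ∗ φ` over `S` is at most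
`‖φ‖₁ ^ (p - 1)` times the `|φ|`-average of the integrals of `|f| ^ p` over the translates of `S`. -/
lemma lintegral_conv_rpow_le {n : ℕ} {p : ℝ} (hp : 1 ≤ p) {f φ : EuclideanSpace ℝ (Fin n) → ℝ}
    (hf : AEMeasurable (fun y => |f y|)) (hφ : AEMeasurable φ)
    {S : Set (EuclideanSpace ℝ (Fin n))} :
    ∫⁻ x in S, ‖conv n f φ x‖ₑ ^ p ≤
      (∫⁻ z, ‖φ z‖ₑ) ^ (p - 1) * ∫⁻ z, ‖φ z‖ₑ * ∫⁻ x in S, ‖f (x - z)‖ₑ ^ p := by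
  have hg : AEMeasurable (fun y => ‖f y‖ₑ) := by simpa using hf.enorm
  have qmp := quasiMeasurePreserving_sub_of_right_invariant
    (volume : Measure (EuclideanSpace ℝ (Fin n))) (volume : Measure (EuclideanSpace ℝ (Fin n)))
  have qmpx := quasiMeasurePreserving_sub_left_of_right_invariant
    (volume : Measure (EuclideanSpace ℝ (Fin n)))
  have hpt : ∀ x, ‖conv n f φ x‖ₑ ^ p ≤
      (∫⁻ z, ‖φ z‖ₑ) ^ (p - 1) * ∫⁻ z, ‖φ z‖ₑ * ‖f (x - z)‖ₑ ^ p := by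
    intro x
    have hgx : AEMeasurable (fun z => ‖f (x - z)‖ₑ) := hg.comp_quasiMeasurePreserving (qmpx x)
    have hac := withDensity_absolutelyContinuous
      (volume : Measure (EuclideanSpace ℝ (Fin n))) (fun z => ‖φ z‖ₑ)
    have hJ := lintegral_rpow_le_measure_univ_mul (volume.withDensity fun z => ‖φ z‖ₑ) hp
      (hgx.mono_ac hac)
    rw [lintegral_withDensity_eq_lintegral_mul₀ hφ.enorm hgx,
      lintegral_withDensity_eq_lintegral_mul₀ hφ.enorm (hgx.pow_const p),
      withDensity_apply _ MeasurableSet.univ, Measure.restrict_univ] at hJ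
    refine le_trans ?_ hJ
    gcongr
    refine (enorm_integral_le_lintegral_enorm _).trans_eq ?_
    simp [enorm_mul, mul_comm]
  have hprod : AEMeasurable (fun q : EuclideanSpace ℝ (Fin n) × EuclideanSpace ℝ (Fin n) =>
      ‖φ q.2‖ₑ * ‖f (q.1 - q.2)‖ₑ ^ p) ((volume.restrict S).prod volume) := by
    have : AEMeasurable (fun q : EuclideanSpace ℝ (Fin n) × EuclideanSpace ℝ (Fin n) =>
        ‖φ q.2‖ₑ * ‖f (q.1 - q.2)‖ₑ ^ p) (volume.prod volume) :=
      hφ.enorm.comp_snd.mul ((hg.comp_quasiMeasurePreserving qmp).pow_const p)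
    exact this.mono_ac (Measure.restrict_le_self.absolutelyContinuous.prod .rfl)
  have hshift : ∀ z, AEMeasurable (fun x => ‖f (x - z)‖ₑ ^ p) (volume.restrict S) := fun z =>
    ((hg.comp_quasiMeasurePreserving
      (measurePreserving_sub_right volume z).quasiMeasurePreserving).pow_const p).restrict
  calc ∫⁻ x in S, ‖conv n f φ x‖ₑ ^ p
      ≤ ∫⁻ x in S, (∫⁻ z, ‖φ z‖ₑ) ^ (p - 1) * ∫⁻ z, ‖φ z‖ₑ * ‖f (x - z)‖ₑ ^ p :=
        lintegral_mono fun x => hpt x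
    _ = (∫⁻ z, ‖φ z‖ₑ) ^ (p - 1) * ∫⁻ x in S, ∫⁻ z, ‖φ z‖ₑ * ‖f (x - z)‖ₑ ^ p :=
        lintegral_const_mul'' _ hprod.lintegral_prod_right'
    _ = (∫⁻ z, ‖φ z‖ₑ) ^ (p - 1) * ∫⁻ z, ∫⁻ x in S, ‖φ z‖ₑ * ‖f (x - z)‖ₑ ^ p := by
        rw [lintegral_lintegral_swap hprod]
    _ = _ := by
        congr 1
        exact lintegral_congr fun z => lintegral_const_mul'' _ (hshift z)

/-! ### Passage between real and extended integrals -/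

lemma ofReal_setIntegral_abs_rpow {n : ℕ} {p : ℝ} (hp : 0 ≤ p)
    {u : EuclideanSpace ℝ (Fin n) → ℝ} {S : Set (EuclideanSpace ℝ (Fin n))}
    (hu : IntegrableOn (fun y => |u y| ^ p) S) :
    ENNReal.ofReal (∫ y in S, |u y| ^ p) = ∫⁻ y in S, ‖u y‖ₑ ^ p := by
  rw [ofReal_integral_eq_lintegral_ofReal hu (ae_of_all _ fun y => by positivity)]
  refine lintegral_congr fun y => ?_
  rw [← ENNReal.ofReal_rpow_of_nonneg (abs_nonneg _) hp, ← Real.enorm_eq_ofReal_abs]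

lemma LocIntPow.aemeasurable_abs {n : ℕ} {p : ℝ} (hp : 1 ≤ p)
    {f : EuclideanSpace ℝ (Fin n) → ℝ} (hf : LocIntPow n p f) :
    AEMeasurable (fun y => |f y|) := by
  have hp0 : p ≠ 0 := by linarith
  have h1 : AEMeasurable (fun y => |f y| ^ p) := by
    rw [← Measure.restrict_univ (μ := volume), ← iUnion_ball_nat_succ 0, aemeasurable_iUnion_iff]
    exact fun k => (hf 0 _ (by positivity)).aestronglyMeasurable.aemeasurable
  refine (h1.pow_const p⁻¹).congr (ae_of_all _ fun y => ?_)
  exact Real.rpow_rpow_inv (abs_nonneg _) hp0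

lemma setLIntegral_preimage_sub {n : ℕ} (g : EuclideanSpace ℝ (Fin n) → ℝ≥0∞)
    (S : Set (EuclideanSpace ℝ (Fin n))) (z : EuclideanSpace ℝ (Fin n)) :
    ∫⁻ x in (fun x => x - z) ⁻¹' S, g (x - z) = ∫⁻ y in S, g y :=
  (measurePreserving_sub_right volume z).setLIntegral_comp_preimage_emb
    (measurableEmbedding_subRight z) g S

lemma MemMorrey.exists_lintegral_le {n : ℕ} {p lam : ℝ} (hp : 1 ≤ p)
    {f : EuclideanSpace ℝ (Fin n) → ℝ} (hf : MemMorrey n p lam f) :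
    ∃ C : ℝ, 0 ≤ C ∧ ∀ x r, 0 < r →
      ∫⁻ y in ball x r, ‖f y‖ₑ ^ p ≤ ENNReal.ofReal (C * r ^ lam) := by
  obtain ⟨hloc, C, hC⟩ := hf
  refine ⟨max C 0, le_max_right _ _, fun x r hr => ?_⟩
  rw [← ofReal_setIntegral_abs_rpow (by linarith) (hloc x r hr)]
  refine ENNReal.ofReal_le_ofReal ?_
  have h := hC x r hr
  have hpos : 0 < r ^ lam := Real.rpow_pos_of_pos hr _
  rw [morreyM, Real.rpow_neg hr.le, inv_mul_le_iff₀ hpos, mul_comm] at h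
  exact h.trans (by gcongr; exact le_max_left _ _)

/-- A bound on `∫ |f| ^ p` uniform over the balls of a given radius carries over to `f ∗ φ`, with the
constant multiplied by `‖φ‖₁ ^ p`. -/
lemma lintegral_ball_conv_le {n : ℕ} {p : ℝ} (hp : 1 ≤ p) {f φ : EuclideanSpace ℝ (Fin n) → ℝ}
    (hf : AEMeasurable (fun y => |f y|)) (hφ : AEMeasurable φ) {r : ℝ} {M : ℝ≥0∞}
    (hM : ∀ x, ∫⁻ y in ball x r, ‖f y‖ₑ ^ p ≤ M) (x : EuclideanSpace ℝ (Fin n)) :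
    ∫⁻ y in ball x r, ‖conv n f φ y‖ₑ ^ p ≤ (∫⁻ z, ‖φ z‖ₑ) ^ p * M := by
  refine (lintegral_conv_rpow_le hp hf hφ).trans ?_
  calc (∫⁻ z, ‖φ z‖ₑ) ^ (p - 1) * ∫⁻ z, ‖φ z‖ₑ * ∫⁻ y in ball x r, ‖f (y - z)‖ₑ ^ p
      ≤ (∫⁻ z, ‖φ z‖ₑ) ^ (p - 1) * ∫⁻ z, ‖φ z‖ₑ * M := by
        gcongr with z
        have : ball x r = (fun y => y - z) ⁻¹' ball (x - z) r := by
          ext y; simp [dist_eq_norm]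
        rw [this, setLIntegral_preimage_sub fun y => ‖f y‖ₑ ^ p]
        exact hM _
    _ = (∫⁻ z, ‖φ z‖ₑ) ^ (p - 1) * ((∫⁻ z, ‖φ z‖ₑ) ^ (1 : ℝ) * M) := by
        rw [lintegral_mul_const'' _ hφ.enorm, ENNReal.rpow_one]
    _ = _ := by
        rw [← mul_assoc, ← ENNReal.rpow_add_of_nonneg _ _ (by linarith) zero_le_one,
          sub_add_cancel]

/-! ### The vanishing property -/

/-- The extended-real version of `morreyA`, as a function of a real threshold `t`. -/
noncomputable def eMorreyA (n : ℕ) (p : ℝ) (f : EuclideanSpace ℝ (Fin n) → ℝ) (t : ℝ) : ℝ≥0∞ :=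
  ⨆ x, ∫⁻ y in ball x 1 ∩ {y : EuclideanSpace ℝ (Fin n) | t ≤ ‖y‖}, ‖f y‖ₑ ^ p

lemma eMorreyA_antitone (n : ℕ) (p : ℝ) (f : EuclideanSpace ℝ (Fin n) → ℝ) :
    Antitone (eMorreyA n p f) := fun _ t hst =>
  iSup_mono fun _ => lintegral_mono_set
    (Set.inter_subset_inter_right _ fun y (hy : t ≤ ‖y‖) => hst.trans hy)

lemma eMorreyA_le {n : ℕ} {p : ℝ} {f : EuclideanSpace ℝ (Fin n) → ℝ} {M : ℝ≥0∞}
    (hM : ∀ x, ∫⁻ y in ball x 1, ‖f y‖ₑ ^ p ≤ M) (t : ℝ) : eMorreyA n p f t ≤ M :=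
  iSup_le fun x => (lintegral_mono_set Set.inter_subset_left).trans (hM x)

/-- Under a uniform bound on unit balls the supremum defining `morreyA` is that of a bounded
family, hence is not a junk value. -/
lemma ofReal_morreyA {n : ℕ} {p : ℝ} (hp : 1 ≤ p) {f : EuclideanSpace ℝ (Fin n) → ℝ}
    (hloc : LocIntPow n p f) {M : ℝ≥0∞} (hMtop : M ≠ ∞)
    (hM : ∀ x, ∫⁻ y in ball x 1, ‖f y‖ₑ ^ p ≤ M) (t : ℝ) :
    ENNReal.ofReal (morreyA n p t f) = eMorreyA n p f t := by
  have hint : ∀ x, ENNReal.ofReal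
      (∫ y in ball x 1 ∩ {y : EuclideanSpace ℝ (Fin n) | t ≤ ‖y‖}, |f y| ^ p) =
      ∫⁻ y in ball x 1 ∩ {y : EuclideanSpace ℝ (Fin n) | t ≤ ‖y‖}, ‖f y‖ₑ ^ p := fun x =>
    ofReal_setIntegral_abs_rpow (by linarith) ((hloc x 1 one_pos).mono_set Set.inter_subset_left)
  have hreal : ∀ x, ∫ y in ball x 1 ∩ {y : EuclideanSpace ℝ (Fin n) | t ≤ ‖y‖}, |f y| ^ p =
      (∫⁻ y in ball x 1 ∩ {y : EuclideanSpace ℝ (Fin n) | t ≤ ‖y‖}, ‖f y‖ₑ ^ p).toReal := by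
    intro x
    rw [← hint, ENNReal.toReal_ofReal]
    exact integral_nonneg fun y => by positivity
  have hle := eMorreyA_le hM t
  have htop : eMorreyA n p f t ≠ ∞ := (hle.trans_lt hMtop.lt_top).ne
  rw [morreyA, iSup_congr hreal, ← ENNReal.toReal_iSup, ← eMorreyA, ENNReal.ofReal_toReal htop]
  intro x
  exact ((le_iSup (fun x => ∫⁻ y in ball x 1 ∩
    {y : EuclideanSpace ℝ (Fin n) | t ≤ ‖y‖}, ‖f y‖ₑ ^ p) x).trans_lt htop.lt_top).ne

lemma morreyA_nonneg (n : ℕ) (p t : ℝ) (f : EuclideanSpace ℝ (Fin n) → ℝ) :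
    0 ≤ morreyA n p t f :=
  Real.iSup_nonneg fun _ => integral_nonneg fun y => by positivity

lemma vStar_iff_tendsto_eMorreyA {n : ℕ} {p : ℝ} (hp : 1 ≤ p) {f : EuclideanSpace ℝ (Fin n) → ℝ}
    (hloc : LocIntPow n p f) {M : ℝ≥0∞} (hMtop : M ≠ ∞)
    (hM : ∀ x, ∫⁻ y in ball x 1, ‖f y‖ₑ ^ p ≤ M) :
    VStar n p f ↔ Tendsto (fun N : ℕ => eMorreyA n p f N) atTop (𝓝 0) := by
  simp only [← ofReal_morreyA hp hloc hMtop hM]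
  constructor
  · intro h
    simpa using ENNReal.tendsto_ofReal h
  · intro h
    have := (ENNReal.tendsto_toReal ENNReal.zero_ne_top).comp h
    simpa [Function.comp_def, ENNReal.toReal_ofReal (morreyA_nonneg _ _ _ _), VStar] using this

/-- A point `y` with `N ≤ ‖y‖` is moved by the translation `y ↦ y - z` to a point of norm at least
`N - ‖z‖`, whence the shifted threshold. -/
lemma eMorreyA_conv_le {n : ℕ} {p : ℝ} (hp : 1 ≤ p) {f φ : EuclideanSpace ℝ (Fin n) → ℝ}
    (hf : AEMeasurable (fun y => |f y|)) (hφ : AEMeasurable φ) (N : ℝ) :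
    eMorreyA n p (conv n f φ) N ≤
      (∫⁻ z, ‖φ z‖ₑ) ^ (p - 1) * ∫⁻ z, ‖φ z‖ₑ * eMorreyA n p f (N - ‖z‖) := by
  refine iSup_le fun x => (lintegral_conv_rpow_le hp hf hφ).trans ?_
  gcongr with z
  have hsub : ball x 1 ∩ {y : EuclideanSpace ℝ (Fin n) | N ≤ ‖y‖} ⊆
      (fun y => y - z) ⁻¹'
        (ball (x - z) 1 ∩ {y : EuclideanSpace ℝ (Fin n) | N - ‖z‖ ≤ ‖y‖}) := by
    rintro y ⟨hy, hyN⟩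
    have hyN' : N ≤ ‖y‖ := hyN
    refine ⟨by simpa [dist_eq_norm] using hy, ?_⟩
    change N - ‖z‖ ≤ ‖y - z‖
    linarith [norm_sub_norm_le y z]
  refine (lintegral_mono_set hsub).trans ?_
  rw [setLIntegral_preimage_sub fun y => ‖f y‖ₑ ^ p]
  exact le_iSup (fun x => ∫⁻ y in ball x 1 ∩
    {y : EuclideanSpace ℝ (Fin n) | N - ‖z‖ ≤ ‖y‖}, ‖f y‖ₑ ^ p) (x - z)

/-- Dominated convergence with dominating function `M |φ|`. -/
lemma tendsto_lintegral_eMorreyA {n : ℕ} {p : ℝ} {f φ : EuclideanSpace ℝ (Fin n) → ℝ}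
    (hφ : Integrable φ) {M : ℝ≥0∞} (hMtop : M ≠ ∞)
    (hM : ∀ x, ∫⁻ y in ball x 1, ‖f y‖ₑ ^ p ≤ M)
    (h : Tendsto (fun N : ℕ => eMorreyA n p f N) atTop (𝓝 0)) :
    Tendsto (fun N : ℕ => ∫⁻ z, ‖φ z‖ₑ * eMorreyA n p f (N - ‖z‖)) atTop (𝓝 0) := by
  have ha : Tendsto (eMorreyA n p f) atTop (𝓝 0) := by
    refine tendsto_of_tendsto_of_tendsto_of_le_of_le' tendsto_const_nhds
      (h.comp (tendsto_nat_floor_atTop (α := ℝ))) (.of_forall fun _ => zero_le) ?_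
    filter_upwards [eventually_ge_atTop 0] with t ht
    exact eMorreyA_antitone n p f (Nat.floor_le ht)
  have hm : Measurable (eMorreyA n p f) := (eMorreyA_antitone n p f).measurable
  have := tendsto_lintegral_of_dominated_convergence' (μ := volume)
    (F := fun (N : ℕ) z => ‖φ z‖ₑ * eMorreyA n p f (N - ‖z‖)) (f := fun _ => 0)
    (fun z => ‖φ z‖ₑ * M) (fun N => ?_) (fun N => ae_of_all _ fun z => ?_) ?_
    (ae_of_all _ fun z => ?_)
  · simpa using this
  · exact hφ.aestronglyMeasurable.aemeasurable.enorm.mul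
      (hm.comp (by fun_prop)).aemeasurable
  · dsimp only
    gcongr
    exact eMorreyA_le hM _
  · rw [lintegral_mul_const'' _ hφ.aestronglyMeasurable.aemeasurable.enorm]
    exact ENNReal.mul_ne_top hφ.hasFiniteIntegral.ne hMtop
  · have h1 : Tendsto (fun N : ℕ => (N : ℝ) - ‖z‖) atTop atTop :=
      tendsto_atTop_add_const_right _ _ tendsto_natCast_atTop_atTop
    simpa using ENNReal.Tendsto.const_mul (ha.comp h1) (Or.inr (enorm_ne_top (x := φ z)))

theorem vstar_convolution_invariant (n : ℕ) (hn : 1 ≤ n) (p lam : ℝ)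
    (hp : 1 ≤ p) (hl0 : 0 ≤ lam) (hln : lam ≤ (n : ℝ))
    (f φ : EuclideanSpace ℝ (Fin n) → ℝ)
    (hf : MemMorrey n p lam f) (hfs : VStar n p f) (hφ : Integrable φ) :
    MemMorrey n p lam (conv n f φ) ∧ VStar n p (conv n f φ) := by
  have hp0 : 0 ≤ p := by linarith
  have hfm := hf.1.aemeasurable_abs hp
  have hφm := hφ.aestronglyMeasurable.aemeasurable
  have hcm := aestronglyMeasurable_conv hfm hφm
  obtain ⟨C, hC0, hC⟩ := hf.exists_lintegral_le hp
  set c : ℝ≥0∞ := ∫⁻ z, ‖φ z‖ₑ with hc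
  have hctop : c ≠ ∞ := hφ.hasFiniteIntegral.ne
  have hcp : ∀ q : ℝ, 0 ≤ q → c ^ q ≠ ∞ := fun q hq => ENNReal.rpow_ne_top_of_nonneg hq hctop
  have hball : ∀ x r, 0 < r →
      ∫⁻ y in ball x r, ‖conv n f φ y‖ₑ ^ p ≤ c ^ p * ENNReal.ofReal (C * r ^ lam) :=
    fun x r hr => lintegral_ball_conv_le hp hfm hφm (fun x => hC x r hr) x
  have hfin : ∀ r, c ^ p * ENNReal.ofReal (C * r ^ lam) ≠ ∞ := fun r =>
    ENNReal.mul_ne_top (hcp p hp0) ENNReal.ofReal_ne_top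
  have hloc : LocIntPow n p (conv n f φ) := by
    intro x r hr
    refine ⟨(hcm.aemeasurable.abs.pow_const p).aestronglyMeasurable.restrict, ?_⟩
    refine lt_of_eq_of_lt ?_ ((hball x r hr).trans_lt (hfin r).lt_top)
    refine lintegral_congr fun y => ?_
    rw [Real.enorm_rpow_of_nonneg (abs_nonneg _) hp0, Real.enorm_abs]
  refine ⟨⟨hloc, (c ^ p).toReal * C, fun x r hr => ?_⟩, ?_⟩
  · have hpos : 0 < r ^ lam := Real.rpow_pos_of_pos hr _
    have h1 : ∫ y in ball x r, |conv n f φ y| ^ p ≤ (c ^ p).toReal * (C * r ^ lam) := by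
      have h2 := hball x r hr
      rw [← ofReal_setIntegral_abs_rpow hp0 (hloc x r hr), ← ENNReal.ofReal_toReal (hcp p hp0),
        ← ENNReal.ofReal_mul ENNReal.toReal_nonneg] at h2
      exact (ENNReal.ofReal_le_ofReal_iff (by positivity)).1 h2
    rw [morreyM, Real.rpow_neg hr.le, inv_mul_le_iff₀ hpos]
    linarith
  · have hM1 := fun x => hC x 1 one_pos
    rw [vStar_iff_tendsto_eMorreyA hp hf.1 ENNReal.ofReal_ne_top hM1] at hfs
    rw [vStar_iff_tendsto_eMorreyA hp hloc (hfin 1) fun x => hball x 1 one_pos]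
    have hlim := ENNReal.Tendsto.const_mul (a := c ^ (p - 1))
      (tendsto_lintegral_eMorreyA hφ ENNReal.ofReal_ne_top hM1 hfs)
      (Or.inr (hcp (p - 1) (by linarith)))
    rw [mul_zero] at hlim
    exact tendsto_of_tendsto_of_tendsto_of_le_of_le tendsto_const_nhds hlim
      (fun _ => zero_le) fun N => eMorreyA_conv_le hp hfm hφm N
end

section
/- Let n ≥ 1, 1 ≤ p < ∞ and 0 ≤ λ < n. Suppose f : ℝⁿ → ℝ is uniformly continuous, belongs to the homogeneous Morrey space L^{p,λ}(ℝⁿ), and satisfies both vanishing properties (V⁰) and (V^∞). Then for every ε > 0 there exists an infinitely differentiable function g : ℝⁿ → ℝ which belongs to L^{p,λ}(ℝⁿ), satisfies (V⁰) and (V^∞), and has ‖f − g‖_{p,λ} < ε. -/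
/-!
The approximant is a mollification `g = φ ⋆ f` with a normalised bump `φ` of small support, that is,
`g y = ∫ f (y - z) dν z` for the probability measure `ν = φ dz`.

* Averaging does not increase the Morrey quantities at a fixed radius: by Jensen's inequality
  `|g y| ^ p ≤ ∫ |f (y - z)| ^ p dν z`, and Tonelli together with translation invariance turns a bound
  on `∫_{B(x,r)} |f| ^ p` uniform in `x` into the same bound for `g` (`setIntegral_conv_le`). Hence
  `sup_x 𝔐(g;x,r) ≤ sup_x 𝔐(f;x,r)`, which gives membership and both vanishing properties of `g`.
* For the norm of `f - g`, the radii `r ≥ R` are controlled by `(V^∞)` for `f`, hence also for `g`.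
  For `r < R`, uniform continuity gives `|f - g| ≤ ω`, and then
  `𝔐(f - g;x,r) ≤ c r ^ (n - λ) ω ^ p ≤ c R ^ (n - λ) ω ^ p`, which is small with `ω` as `λ < n`.
-/

open MeasureTheory Metric Filter Topology

lemma abs_rpow_continuous {X : Type*} [TopologicalSpace X] {p : ℝ} (hp : 1 ≤ p) {f : X → ℝ}
    (hf : Continuous f) : Continuous (fun y => |f y| ^ p) :=
  hf.abs.rpow_const fun _ => Or.inr (by linarith)

lemma locIntPow_of_continuous {n : ℕ} {p : ℝ} (hp : 1 ≤ p) {f : EuclideanSpace ℝ (Fin n) → ℝ}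
    (hf : Continuous f) : LocIntPow n p f := fun x r _ =>
  ((abs_rpow_continuous hp hf).continuousOn.integrableOn_compact
    (isCompact_closedBall x r)).mono_set ball_subset_closedBall

lemma convexOn_abs_rpow {p : ℝ} (hp : 1 ≤ p) :
    ConvexOn ℝ Set.univ (fun t : ℝ => |t| ^ p) := by
  refine ⟨convex_univ, fun x _ y _ a b ha hb hab => ?_⟩
  have h := (convexOn_rpow hp).2 (Set.mem_Ici.2 (abs_nonneg x)) (Set.mem_Ici.2 (abs_nonneg y))
    ha hb hab
  refine le_trans (Real.rpow_le_rpow (abs_nonneg _) ?_ (by linarith)) h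
  refine (abs_add_le _ _).trans_eq ?_
  simp [abs_mul, abs_of_nonneg ha, abs_of_nonneg hb]

lemma abs_sub_rpow_le {p : ℝ} (hp : 1 ≤ p) (a b : ℝ) :
    |a - b| ^ p ≤ 2 ^ p * (|a| ^ p + |b| ^ p) := by
  have h1 : |a - b| ≤ 2 * max |a| |b| := by
    have := abs_sub a b
    linarith [le_max_left |a| |b|, le_max_right |a| |b|]
  have hm : (max |a| |b|) ^ p ≤ |a| ^ p + |b| ^ p := by
    have ha : 0 ≤ |a| ^ p := by positivity
    have hb : 0 ≤ |b| ^ p := by positivity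
    rcases max_choice |a| |b| with h | h <;> rw [h] <;> linarith
  calc |a - b| ^ p ≤ (2 * max |a| |b|) ^ p :=
        Real.rpow_le_rpow (abs_nonneg _) h1 (by linarith)
    _ = 2 ^ p * (max |a| |b|) ^ p := Real.mul_rpow (by norm_num) (by positivity)
    _ ≤ _ := by gcongr

/-- Averaging translates of `f` against a probability measure preserves a
bound on the `p`-th power integrals over all balls of radius `r`. -/
lemma setIntegral_conv_le {n : ℕ} {p : ℝ} (hp : 1 ≤ p) {f g : EuclideanSpace ℝ (Fin n) → ℝ}
    (hf : Continuous f) (hg : Continuous g)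
    (ν : Measure (EuclideanSpace ℝ (Fin n))) [IsProbabilityMeasure ν]
    (hν : ∀ h : EuclideanSpace ℝ (Fin n) → ℝ, Continuous h → Integrable h ν)
    (hgf : ∀ y, g y = ∫ z, f (y - z) ∂ν) {r K : ℝ} (hr : 0 < r)
    (hK : ∀ x, ∫ y in ball x r, |f y| ^ p ≤ K) (x : EuclideanSpace ℝ (Fin n)) :
    ∫ y in ball x r, |g y| ^ p ≤ K := by
  have hfp := abs_rpow_continuous hp hf
  have hK0 : 0 ≤ K := le_trans (integral_nonneg fun y => by positivity) (hK x)
  have jensen : ∀ y, ENNReal.ofReal (|g y| ^ p)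
      ≤ ∫⁻ z, ENNReal.ofReal (|f (y - z)| ^ p) ∂ν := by
    intro y
    have hc : Continuous fun z => f (y - z) := by fun_prop
    have hcp := abs_rpow_continuous hp hc
    rw [← ofReal_integral_eq_lintegral_ofReal (hν _ hcp)
      (Eventually.of_forall fun z => by positivity), hgf y]
    refine ENNReal.ofReal_le_ofReal ?_
    exact (convexOn_abs_rpow hp).map_integral_le
      (continuous_abs.rpow_const fun _ => Or.inr (by linarith)).continuousOn isClosed_univ
      (by simp) (hν _ hc) (hν _ hcp)
  have translate : ∀ z, ∫⁻ y in ball x r, ENNReal.ofReal (|f (y - z)| ^ p)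
      ≤ ENNReal.ofReal K := by
    intro z
    have h1 : ∫⁻ y in ball x r, ENNReal.ofReal (|f (y - z)| ^ p)
        = ∫⁻ y in ball (x - z) r, ENNReal.ofReal (|f y| ^ p) := by
      have h := (measurePreserving_sub_right (volume : Measure (EuclideanSpace ℝ (Fin n))) z)
      have := h.setLIntegral_comp_preimage (s := ball (x - z) r) measurableSet_ball
        (f := fun y => ENNReal.ofReal (|f y| ^ p)) hfp.measurable.ennreal_ofReal
      rw [← this]
      congr 2
      ext y
      simp [dist_eq_norm]
    rw [h1, ← ofReal_integral_eq_lintegral_ofReal (locIntPow_of_continuous hp hf _ r hr)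
      (Eventually.of_forall fun z => by positivity)]
    exact ENNReal.ofReal_le_ofReal (hK _)
  rw [← ENNReal.ofReal_le_ofReal_iff hK0,
    ofReal_integral_eq_lintegral_ofReal (locIntPow_of_continuous hp hg _ r hr)
      (Eventually.of_forall fun z => by positivity)]
  have hcont : Continuous (Function.uncurry fun y z : EuclideanSpace ℝ (Fin n) =>
      |f (y - z)| ^ p) := by
    refine abs_rpow_continuous (f := fun q : _ × _ => f (q.1 - q.2)) hp ?_
    fun_prop
  calc ∫⁻ y in ball x r, ENNReal.ofReal (|g y| ^ p)
      ≤ ∫⁻ y in ball x r, ∫⁻ z, ENNReal.ofReal (|f (y - z)| ^ p) ∂ν := lintegral_mono jensen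
    _ = ∫⁻ z, (∫⁻ y in ball x r, ENNReal.ofReal (|f (y - z)| ^ p)) ∂ν :=
        lintegral_lintegral_swap hcont.measurable.ennreal_ofReal.aemeasurable
    _ ≤ ∫⁻ _, ENNReal.ofReal K ∂ν := lintegral_mono translate
    _ = ENNReal.ofReal K := by simp

/-- A bump of small support, packaged as a probability measure `ν`, yields a smooth `ω`-approximant
of a uniformly continuous function. -/
lemma exists_mollifier {n : ℕ} {f : EuclideanSpace ℝ (Fin n) → ℝ} (hfu : UniformContinuous f)
    {ω : ℝ} (hω : 0 < ω) :
    ∃ (g : EuclideanSpace ℝ (Fin n) → ℝ) (ν : Measure (EuclideanSpace ℝ (Fin n))),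
      ContDiff ℝ (⊤ : ℕ∞) g ∧ IsProbabilityMeasure ν ∧
      (∀ h : EuclideanSpace ℝ (Fin n) → ℝ, Continuous h → Integrable h ν) ∧
      (∀ y, g y = ∫ z, f (y - z) ∂ν) ∧ ∀ y, |f y - g y| ≤ ω := by
  obtain ⟨δ, hδ, hfδ⟩ := Metric.uniformContinuous_iff.1 hfu ω hω
  let φ : ContDiffBump (0 : EuclideanSpace ℝ (Fin n)) := ⟨δ / 2, δ, by positivity, by linarith⟩
  let ψ : EuclideanSpace ℝ (Fin n) → ℝ := φ.normed volume
  have hψc : Continuous ψ := φ.continuous_normed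
  have hψ0 : ∀ z, 0 ≤ ψ z := fun z => φ.nonneg_normed z
  have hψm : Measurable fun z => ENNReal.ofReal (ψ z) := hψc.measurable.ennreal_ofReal
  -- The convolution integral `∫ ψ z • f (y - z)` is the integral of `f (y - z)` against `ψ dz`.
  refine ⟨convolution ψ f (ContinuousLinearMap.lsmul ℝ ℝ) volume,
    volume.withDensity fun z => ENNReal.ofReal (ψ z), ?_, ?_, ?_, ?_, ?_⟩
  · exact φ.hasCompactSupport_normed.contDiff_convolution_left _ φ.contDiff_normed
      hfu.continuous.locallyIntegrable
  · refine ⟨?_⟩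
    rw [withDensity_apply _ MeasurableSet.univ, Measure.restrict_univ,
      ← ofReal_integral_eq_lintegral_ofReal φ.integrable_normed (Eventually.of_forall hψ0),
      φ.integral_normed, ENNReal.ofReal_one]
  · intro h hh
    rw [integrable_withDensity_iff_integrable_smul' hψm (by simp)]
    refine Continuous.integrable_of_hasCompactSupport ?_ ?_
    · simp only [ENNReal.toReal_ofReal (hψ0 _)]
      fun_prop
    · simp only [ENNReal.toReal_ofReal (hψ0 _)]
      exact φ.hasCompactSupport_normed.smul_right
  · intro y
    rw [integral_withDensity_eq_integral_toReal_smul hψm (by simp)]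
    simp only [ENNReal.toReal_ofReal (hψ0 _)]
    rfl
  · intro y
    rw [← Real.dist_eq, dist_comm]
    refine φ.dist_normed_convolution_le hfu.continuous.aestronglyMeasurable ?_
    intro z hz
    exact (hfδ hz).le

/-- If `|h| ≤ ω` everywhere, then `𝔐(h;x,r)` is at most `|B(0,1)| R ^ (n - λ) ω ^ p` for all
`r ≤ R`. -/
lemma morreyM_le_of_bound {n : ℕ} {p lam : ℝ} (hp : 1 ≤ p) (hln : lam < (n : ℝ))
    {h : EuclideanSpace ℝ (Fin n) → ℝ} (hh : Continuous h) {ω : ℝ}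
    (hω : ∀ y, |h y| ≤ ω) {r R : ℝ} (hr : 0 < r) (hrR : r ≤ R) (x : EuclideanSpace ℝ (Fin n)) :
    morreyM n p lam h x r
      ≤ (volume : Measure (EuclideanSpace ℝ (Fin n))).real (ball 0 1) * R ^ (n - lam) * ω ^ p := by
  have hω0 : 0 ≤ ω := (abs_nonneg _).trans (hω x)
  have h1 : ∫ y in ball x r, |h y| ^ p ≤ ∫ y in ball x r, ω ^ p := by
    refine integral_mono (locIntPow_of_continuous hp hh x r hr)
      (integrableOn_const measure_ball_lt_top.ne) fun y => ?_
    exact Real.rpow_le_rpow (abs_nonneg _) (hω y) (by linarith)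
  have h2 : volume.real (ball x r)
      = r ^ n * (volume : Measure (EuclideanSpace ℝ (Fin n))).real (ball 0 1) := by
    rw [Measure.real, Measure.addHaar_ball_of_pos _ _ hr, ENNReal.toReal_mul,
      ENNReal.toReal_ofReal (by positivity), finrank_euclideanSpace_fin, Measure.real]
  rw [setIntegral_const, h2, smul_eq_mul] at h1
  have h3 : r ^ (-lam) * r ^ n = r ^ (n - lam) := by
    rw [← Real.rpow_natCast, ← Real.rpow_add hr]
    congr 1
    ring
  calc morreyM n p lam h x r
      ≤ r ^ (-lam) * (r ^ n * (volume : Measure (EuclideanSpace ℝ (Fin n))).real (ball 0 1)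
          * ω ^ p) := mul_le_mul_of_nonneg_left h1 (by positivity)
    _ = (volume : Measure (EuclideanSpace ℝ (Fin n))).real (ball 0 1) * r ^ (n - lam) * ω ^ p := by
        rw [← h3]
        ring
    _ ≤ _ := by
        have : r ^ ((n : ℝ) - lam) ≤ R ^ ((n : ℝ) - lam) :=
          Real.rpow_le_rpow hr.le hrR (by linarith)
        gcongr

lemma morreyM_nonneg {n : ℕ} {p lam : ℝ} {f : EuclideanSpace ℝ (Fin n) → ℝ}
    {x : EuclideanSpace ℝ (Fin n)} {r : ℝ} (hr : 0 < r) : 0 ≤ morreyM n p lam f x r :=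
  mul_nonneg (by positivity) (integral_nonneg fun y => by positivity)

lemma morreyM_sub_le {n : ℕ} {p lam : ℝ} (hp : 1 ≤ p) {f g : EuclideanSpace ℝ (Fin n) → ℝ}
    (hf : Continuous f) (hg : Continuous g) {r : ℝ} (hr : 0 < r) (x : EuclideanSpace ℝ (Fin n)) :
    morreyM n p lam (fun y => f y - g y) x r
      ≤ 2 ^ p * (morreyM n p lam f x r + morreyM n p lam g x r) := by
  have If := locIntPow_of_continuous hp hf x r hr
  have Ig := locIntPow_of_continuous hp hg x r hr
  have h1 : ∫ y in ball x r, |f y - g y| ^ p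
      ≤ 2 ^ p * ((∫ y in ball x r, |f y| ^ p) + ∫ y in ball x r, |g y| ^ p) := by
    rw [← integral_add If Ig, ← integral_const_mul]
    exact integral_mono (locIntPow_of_continuous hp (hf.sub hg) x r hr) ((If.add Ig).const_mul _)
      fun y => abs_sub_rpow_le hp _ _
  calc morreyM n p lam (fun y => f y - g y) x r
      ≤ r ^ (-lam) * (2 ^ p * ((∫ y in ball x r, |f y| ^ p) + ∫ y in ball x r, |g y| ^ p)) :=
        mul_le_mul_of_nonneg_left h1 (by positivity)
    _ = _ := by
        unfold morreyM
        ring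

theorem uniformly_continuous_approx (n : ℕ) (hn : 1 ≤ n) (p lam : ℝ)
    (hp : 1 ≤ p) (hl0 : 0 ≤ lam) (hln : lam < (n : ℝ))
    (f : EuclideanSpace ℝ (Fin n) → ℝ) (hfu : UniformContinuous f)
    (hf : MemMorrey n p lam f) (h0 : VZero n p lam f) (hi : VInfty n p lam f) :
    ∀ ε : ℝ, 0 < ε →
      ∃ g : EuclideanSpace ℝ (Fin n) → ℝ, ContDiff ℝ (⊤ : ℕ∞) g ∧
        MemMorrey n p lam g ∧ VZero n p lam g ∧ VInfty n p lam g ∧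
        morreyNorm n p lam (fun y => f y - g y) < ε := by
  intro ε hε
  have hfc := hfu.continuous
  obtain ⟨C, hC⟩ := hf.2
  have hbdd : ∀ r, 0 < r → BddAbove (Set.range fun x => morreyM n p lam f x r) :=
    fun r hr => ⟨C, by rintro _ ⟨x, rfl⟩; exact hC x r hr⟩
  set η : ℝ := (ε / 2) ^ p with hη
  have hη0 : 0 < η := by positivity
  -- The factor `2 ^ p * 2` is the cost of splitting `|f - g| ^ p` into `f` and `g` parts.
  have hη' : 0 < η / (2 ^ p * 2) := by positivity
  obtain ⟨R₀, hR₀⟩ := eventually_atTop.1 (hi.eventually (gt_mem_nhds hη'))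
  set R : ℝ := max R₀ 1
  have hR : 0 < R := lt_of_lt_of_le one_pos (le_max_right _ _)
  set c : ℝ := (volume : Measure (EuclideanSpace ℝ (Fin n))).real (ball 0 1) * R ^ (n - lam)
  have hc : 0 ≤ c := by positivity
  set ω : ℝ := (η / (c + 1)) ^ (1 / p)
  have hω : 0 < ω := by positivity
  have hωp : c * ω ^ p ≤ η := by
    have : ω ^ p = η / (c + 1) := by
      rw [← Real.rpow_mul (by positivity), one_div_mul_cancel (by linarith), Real.rpow_one]
    rw [this, mul_div_assoc', div_le_iff₀ (by positivity)]
    nlinarith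
  obtain ⟨g, ν, hgs, hνp, hν, hgf, hfg⟩ := exists_mollifier hfu hω
  have hgc : Continuous g := hgs.continuous
  have key : ∀ r, 0 < r → ∀ x, morreyM n p lam g x r ≤ ⨆ x, morreyM n p lam f x r := by
    intro r hr x
    have hrl : 0 < r ^ (-lam) := by positivity
    have := setIntegral_conv_le hp hfc hgc ν hν hgf hr
      (K := (⨆ x, morreyM n p lam f x r) / r ^ (-lam))
      (fun x => (le_div_iff₀' hrl).2 (le_ciSup (hbdd r hr) x)) x
    exact (le_div_iff₀' hrl).1 this
  have hsup0 : ∀ r, 0 < r → 0 ≤ ⨆ x, morreyM n p lam g x r :=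
    fun r hr => Real.iSup_nonneg fun x => morreyM_nonneg hr
  have hsup : ∀ r, 0 < r → ⨆ x, morreyM n p lam g x r ≤ ⨆ x, morreyM n p lam f x r :=
    fun r hr => ciSup_le (key r hr)
  refine ⟨g, hgs, ⟨locIntPow_of_continuous hp hgc, C, fun x r hr => ?_⟩, ?_, ?_, ?_⟩
  · exact (key r hr x).trans (ciSup_le fun x => hC x r hr)
  · refine tendsto_of_tendsto_of_tendsto_of_le_of_le' tendsto_const_nhds h0 ?_ ?_
    · filter_upwards [self_mem_nhdsWithin] with r hr using hsup0 r hr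
    · filter_upwards [self_mem_nhdsWithin] with r hr using hsup r hr
  · refine tendsto_of_tendsto_of_tendsto_of_le_of_le' tendsto_const_nhds hi ?_ ?_
    · filter_upwards [eventually_gt_atTop 0] with r hr using hsup0 r hr
    · filter_upwards [eventually_gt_atTop 0] with r hr using hsup r hr
  · have hbound : ∀ x r, 0 < r → morreyM n p lam (fun y => f y - g y) x r ≤ η := by
      intro x r hr
      rcases le_total r R with hrR | hrR
      · exact (morreyM_le_of_bound hp hln (hfc.sub hgc) hfg hr hrR x).trans hωp
      · have hs := (hR₀ r ((le_max_left _ _).trans hrR)).le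
        calc _ ≤ 2 ^ p * (morreyM n p lam f x r + morreyM n p lam g x r) :=
              morreyM_sub_le hp hfc hgc hr x
          _ ≤ 2 ^ p * (η / (2 ^ p * 2) + η / (2 ^ p * 2)) := by
              gcongr
              · exact (le_ciSup (hbdd r hr) x).trans hs
              · exact (key r hr x).trans hs
          _ = η := by
              field_simp
              ring
    have hS : sSup {c : ℝ | ∃ x r, 0 < r ∧ c = morreyM n p lam (fun y => f y - g y) x r} ≤ η :=
      Real.sSup_le (by rintro _ ⟨x, r, hr, rfl⟩; exact hbound x r hr) hη0.le
    have hS0 : 0 ≤ sSup {c : ℝ | ∃ x r, 0 < r ∧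
        c = morreyM n p lam (fun y => f y - g y) x r} :=
      Real.sSup_nonneg (by rintro _ ⟨x, r, hr, rfl⟩; exact morreyM_nonneg hr)
    calc morreyNorm n p lam (fun y => f y - g y) ≤ η ^ (1 / p) :=
          Real.rpow_le_rpow hS0 hS (by positivity)
      _ = ε / 2 := by
          rw [hη, ← Real.rpow_mul (by positivity), mul_one_div_cancel (by linarith),
            Real.rpow_one]
      _ < ε := by linarith
end
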